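/- In the finite multinode multistage setting (nodes N, arcs A, hours H, incidence matrix M, horizon T, stagewise-independent finite noise with weights q t, nodal states S i, nonempty controls U i, dynamics f t i, nonnegative costs c t i, bounded balance maps b t i, nonnegative terminal costs K i, nonempty bounded arc-flow set B, nonnegative transport costs τ t), define the constrained global cost-to-go recursion with values in the extended reals: V T s = ∑_i K i (s i), and V t s = ∑_{ξ} q t ξ * ⨅ over pairs (u, r) ∈ (Π i, U i) × B satisfying the coupling constraint b t i ξ (u i) = (M r) i for every node i, of [∑_{i} c t i (s i) ξ (u i) + τ t r + V (t+1) (fun i ↦ f t i (s i) ξ (u i))] (the infimum over an empty feasible set being +∞). Let W be the dualized global recursion associated with a deterministic price process p : Fin T → N → H → ℝ, in which the coupling constraint is removed and the penalty ∑_{i,h} p t i h * (b t i ξ (u i) h − (M r) i h) is added to the stage cost. Then for every price process p, every stage t and every state s, W t s ≤ V t s. -/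

import Mathlib

/-!
Backward induction on the stage. On a feasible pair `(u, r)` the penalty vanishes, so by the
induction hypothesis the dualized stage objective is at most the constrained one there; the real
infimum over all pairs is therefore below the extended-real infimum over feasible pairs, and
averaging with the nonnegative weights `q t` preserves the inequality.

Since `⨅` of a real family unbounded below is the junk value `0`, the comparison needs the
dualized stage objective to be bounded below. The penalty is bounded because `b` and `B` are
(`penalty_bounded_below`), the costs are nonnegative, and a uniform lower bound on `W (t + 1)`
passes to `W t`; this bound is carried through the same induction.
-/

/-- At fixed prices `p`, the penalty is bounded below uniformly over balances `x` and arc flows `r`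
whose entries are bounded by `C` and `R`. -/
lemma penalty_bounded_below {N A H : Type*} [Fintype N] [Fintype A] [Fintype H]
    (M : Matrix N A ℝ) (p : N → H → ℝ) (C R : ℝ) :
    ∃ D : ℝ, ∀ (x : N → H → ℝ) (r : A → H → ℝ), (∀ i h, |x i h| ≤ C) → (∀ a h, |r a h| ≤ R) →
      D ≤ ∑ i, ∑ h, p i h * (x i h - ∑ a, M i a * r a h) := by
  refine ⟨∑ i, ∑ h, -(|p i h| * (C + ∑ a, |M i a| * R)), fun x r hx hr => ?_⟩
  refine Finset.sum_le_sum fun i _ => Finset.sum_le_sum fun h _ => ?_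
  have hflow : |∑ a, M i a * r a h| ≤ ∑ a, |M i a| * R :=
    (Finset.abs_sum_le_sum_abs _ _).trans <| Finset.sum_le_sum fun a _ => by
      rw [abs_mul]
      exact mul_le_mul_of_nonneg_left (hr a h) (abs_nonneg _)
  have hdiff : |x i h - ∑ a, M i a * r a h| ≤ C + ∑ a, |M i a| * R :=
    (abs_sub _ _).trans (add_le_add (hx i h) hflow)
  have hprod := mul_le_mul_of_nonneg_left hdiff (abs_nonneg (p i h))
  rw [← abs_mul] at hprod
  exact (neg_le_neg hprod).trans (neg_abs_le _)

lemma ereal_coe_sum {ι : Type*} (t : Finset ι) (g : ι → ℝ) :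
    ((∑ i ∈ t, g i : ℝ) : EReal) = ∑ i ∈ t, (g i : EReal) :=
  map_sum (⟨⟨Real.toEReal, EReal.coe_zero⟩, EReal.coe_add⟩ : ℝ →+ EReal) g t

/-- Stagewise weak duality propagated through the Bellman recursion: for any
deterministic price process `p`, the dualized global cost-to-go functions `W`
(coupling constraint removed, penalty `∑ i h, p t i h * (b t i ξ (u i) h −
(M r) i h)` added to the stage cost) are pointwise lower bounds for the
constrained global cost-to-go functions `V` (with values in the extended reals,
the infimum over an empty feasible set being `+∞`), at every stage. The
incidence matrix acts hour-wise: `(M r) i h = ∑ a, M i a * r a h`. -/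
theorem dualized_le_constrained_costToGo
    {N A H : Type*} [Fintype N] [Nonempty N] [Fintype A] [Nonempty A]
    [Fintype H] [Nonempty H]
    (M : Matrix N A ℝ)
    {T : ℕ} {Ξ : Type*} [Fintype Ξ] [Nonempty Ξ]
    (q : Fin T → Ξ → ℝ) (hq0 : ∀ t ξ, 0 ≤ q t ξ) (hq1 : ∀ t, ∑ ξ, q t ξ = 1)
    {S : N → Type*} {U : N → Type*} [∀ i, Nonempty (U i)]
    (f : ∀ t : Fin T, ∀ i : N, S i → Ξ → U i → S i)
    (c : ∀ t : Fin T, ∀ i : N, S i → Ξ → U i → ℝ)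
    (hc : ∀ t i si ξ u, 0 ≤ c t i si ξ u)
    (b : ∀ t : Fin T, ∀ i : N, Ξ → U i → H → ℝ)
    (hb : ∃ C : ℝ, ∀ t i ξ u h, |b t i ξ u h| ≤ C)
    (K : ∀ i : N, S i → ℝ) (hK : ∀ i si, 0 ≤ K i si)
    (B : Set (A → H → ℝ)) (hBne : B.Nonempty)
    (hBbd : ∃ C : ℝ, ∀ r ∈ B, ∀ a h, |r a h| ≤ C)
    (τ : Fin T → (A → H → ℝ) → ℝ) (hτ : ∀ t r, 0 ≤ τ t r)
    (p : Fin T → N → H → ℝ)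
    -- the constrained global cost-to-go recursion, with values in the extended reals
    (V : Fin (T + 1) → (∀ i, S i) → EReal)
    (hVT : ∀ s, V (Fin.last T) s = ((∑ i, K i (s i) : ℝ) : EReal))
    (hV : ∀ (t : Fin T) (s : ∀ i, S i),
      V t.castSucc s = ∑ ξ : Ξ, ((q t ξ : ℝ) : EReal) *
        (⨅ ur : {ur : (∀ i, U i) × ↥B //
            ∀ i h, b t i ξ (ur.1 i) h = ∑ a, M i a * ur.2.val a h},
          ((((∑ i, c t i (s i) ξ (ur.val.1 i)) + τ t ur.val.2.val : ℝ) : EReal)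
            + V t.succ (fun i => f t i (s i) ξ (ur.val.1 i)))))
    -- the dualized global recursion associated with the price process `p`
    (W : Fin (T + 1) → (∀ i, S i) → ℝ)
    (hWT : ∀ s, W (Fin.last T) s = ∑ i, K i (s i))
    (hW : ∀ (t : Fin T) (s : ∀ i, S i),
      W t.castSucc s = ∑ ξ : Ξ, q t ξ *
        (⨅ ur : (∀ i, U i) × ↥B,
          ((∑ i, c t i (s i) ξ (ur.1 i)) + τ t ur.2.val
            + (∑ i, ∑ h, p t i h * (b t i ξ (ur.1 i) h - ∑ a, M i a * ur.2.val a h))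
            + W t.succ (fun i => f t i (s i) ξ (ur.1 i))))) :
    ∀ (t : Fin (T + 1)) (s : ∀ i, S i), ((W t s : ℝ) : EReal) ≤ V t s := by
  obtain ⟨C, hC⟩ := hb
  obtain ⟨R, hR⟩ := hBbd
  have : Nonempty ↥B := hBne.to_subtype
  suffices key : ∀ t : Fin (T + 1),
      (∃ L : ℝ, ∀ s, L ≤ W t s) ∧ ∀ s, ((W t s : ℝ) : EReal) ≤ V t s from fun t => (key t).2
  intro t
  induction t using Fin.reverseInduction with
  | last =>
    refine ⟨⟨0, fun s => ?_⟩, fun s => ?_⟩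
    · rw [hWT]
      exact Finset.sum_nonneg fun i _ => hK i _
    · rw [hWT, hVT]
  | cast t ih =>
    obtain ⟨⟨L, hL⟩, hWV⟩ := ih
    obtain ⟨D, hD⟩ := penalty_bounded_below M (p t) C R
    have hobj : ∀ (s : ∀ i, S i) (ξ : Ξ) (ur : (∀ i, U i) × ↥B),
        D + L ≤ (∑ i, c t i (s i) ξ (ur.1 i)) + τ t ur.2.val
            + (∑ i, ∑ h, p t i h * (b t i ξ (ur.1 i) h - ∑ a, M i a * ur.2.val a h))
            + W t.succ (fun i => f t i (s i) ξ (ur.1 i)) := by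
      intro s ξ ur
      have h1 : 0 ≤ ∑ i, c t i (s i) ξ (ur.1 i) := Finset.sum_nonneg fun i _ => hc _ _ _ _ _
      have h2 := hτ t ur.2.val
      have h3 := hD (fun i h => b t i ξ (ur.1 i) h) ur.2.val (fun i h => hC _ _ _ _ _)
        (hR _ ur.2.property)
      have h4 := hL (fun i => f t i (s i) ξ (ur.1 i))
      linarith
    refine ⟨⟨D + L, fun s => ?_⟩, fun s => ?_⟩
    · rw [hW]
      -- the weights `q t` sum to one, so the bound on each infimum survives the average
      calc D + L = ∑ ξ, q t ξ * (D + L) := by rw [← Finset.sum_mul, hq1, one_mul]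
        _ ≤ _ := Finset.sum_le_sum fun ξ _ =>
          mul_le_mul_of_nonneg_left (le_ciInf (hobj s ξ)) (hq0 t ξ)
    · rw [hW, hV, ereal_coe_sum]
      refine Finset.sum_le_sum fun ξ _ => ?_
      rw [EReal.coe_mul]
      refine mul_le_mul_of_nonneg_left ?_ (EReal.coe_nonneg.2 (hq0 t ξ))
      refine le_iInf fun ur => ?_
      have hle := ciInf_le ⟨D + L, Set.forall_mem_range.2 (hobj s ξ)⟩ ur.val
      have hpen : ∑ i, ∑ h, p t i h *
          (b t i ξ (ur.val.1 i) h - ∑ a, M i a * ur.val.2.val a h) = 0 :=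
        Finset.sum_eq_zero fun i _ => Finset.sum_eq_zero fun h _ => by
          rw [ur.property i h, sub_self, mul_zero]
      rw [hpen, add_zero] at hle
      refine (EReal.coe_le_coe_iff.2 hle).trans ?_
      rw [EReal.coe_add]
      gcongr
      exact hWV _
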